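/- Let K be a q-arc in PG(n,q) with q ≥ n+3 (n ≥ 2), or q = p = n+2 a prime with n ≥ 2. Then the closure of K is all of PG(n,q). -/

import Mathlib

open scoped LinearAlgebra.Projectivization

variable {F : Type*} [Field F] {n : ℕ}

/-- A point set `K` of a projective space `PG(n,q)` is an arc if it has at least `n+1` points
and no `n+1` of its points lie on a hyperplane, i.e. every `n+1` of its points span. -/
def IsArc {F V : Type*} [Field F] [AddCommGroup V] [Module F V] (n : ℕ) (K : Set (ℙ F V)) :
    Prop :=
  n + 1 ≤ K.ncard ∧
    ∀ S : Finset (ℙ F V), ↑S ⊆ K → S.card = n + 1 → (⨆ p ∈ S, p.submodule) = ⊤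

/-- A set `T` of projective points is closed under taking intersection points: whenever two
subspaces spanned by points of `T` intersect in exactly one projective point, that point
belongs to `T`. -/
def ClosedUnderMeets {F V : Type*} [Field F] [AddCommGroup V] [Module F V]
    (T : Set (ℙ F V)) : Prop :=
  ∀ A B : Set (ℙ F V), A ⊆ T → B ⊆ T → ∀ x : ℙ F V,
    (⨆ p ∈ A, p.submodule) ⊓ (⨆ p ∈ B, p.submodule) = x.submodule → x ∈ T

/-- The closure of a set `S` of projective points: the smallest set containing `S` that is
closed under adding the intersection point of any two spanned subspaces meeting in exactly
one point. -/
def ptClosure {F V : Type*} [Field F] [AddCommGroup V] [Module F V] (S : Set (ℙ F V)) :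
    Set (ℙ F V) :=
  ⋂₀ {T | S ⊆ T ∧ ClosedUnderMeets T}

section ArcAux

variable {G ι : Type*} [Field G] [Fintype ι] [DecidableEq ι]

/-- vector version of closedness -/
def VMeet (S : Set (ι → G)) : Prop :=
  ∀ A B : Set (ι → G), A ⊆ S → B ⊆ S → ∀ x : ι → G, x ≠ 0 →
    Submodule.span G A ⊓ Submodule.span G B = Submodule.span G {x} → x ∈ S

/-- unit vector -/
def ev (i : ι) : ι → G := Pi.single i 1

lemma mem_span_ev (I : Set ι) (w : ι → G) :
    w ∈ Submodule.span G (ev '' I) ↔ ∀ i, i ∉ I → w i = 0 := by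
  constructor
  · intro h
    induction h using Submodule.span_induction with
    | mem x hx =>
      obtain ⟨j, hj, rfl⟩ := hx
      intro i hi
      have : i ≠ j := fun h => hi (h ▸ hj)
      simp [ev, this]
    | zero => simp
    | add x y _ _ hx hy => intro i hi; simp [hx i hi, hy i hi]
    | smul a x _ hx => intro i hi; simp [hx i hi]
  · intro h
    have : w = ∑ i, w i • (ev i : ι → G) := by
      ext j; simp [ev, Finset.sum_apply, Pi.single_apply]
    rw [this]
    refine Submodule.sum_mem _ fun i _ => ?_
    by_cases hi : i ∈ I
    · exact Submodule.smul_mem _ _ (Submodule.subset_span ⟨i, hi, rfl⟩)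
    · simp [h i hi]

lemma VMeet.meet {S : Set (ι → G)} (hm : VMeet S) (A B : Set (ι → G)) (hA : A ⊆ S) (hB : B ⊆ S)
    (x : ι → G) (hx : x ≠ 0) (h1 : x ∈ Submodule.span G A) (h2 : x ∈ Submodule.span G B)
    (h : ∀ y ∈ Submodule.span G A, y ∈ Submodule.span G B → ∃ c : G, y = c • x) : x ∈ S := by
  refine hm A B hA hB x hx (le_antisymm ?_ ?_)
  · rintro y ⟨hy1, hy2⟩
    obtain ⟨c, rfl⟩ := h y hy1 hy2
    exact Submodule.smul_mem _ _ (Submodule.mem_span_singleton_self x)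
  · rw [Submodule.span_singleton_le_iff_mem]
    exact ⟨h1, h2⟩

lemma VMeet.smul {S : Set (ι → G)} (hm : VMeet S) (c : G) (hc : c ≠ 0) (v : ι → G) (hv : v ≠ 0)
    (h : v ∈ S) : c • v ∈ S := by
  refine hm.meet {v} {v} (by simpa) (by simpa) _ (smul_ne_zero hc hv) ?_ ?_ ?_
  · exact Submodule.smul_mem _ _ (Submodule.mem_span_singleton_self v)
  · exact Submodule.smul_mem _ _ (Submodule.mem_span_singleton_self v)
  · intro y hy _
    obtain ⟨d, rfl⟩ := Submodule.mem_span_singleton.1 hy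
    exact ⟨d * c⁻¹, by rw [smul_smul, mul_assoc, inv_mul_cancel₀ hc, mul_one]⟩

lemma ev_sub {S : Set (ι → G)} (he : ∀ i, ev i ∈ S) (I : Set ι) : ev '' I ⊆ S := by
  rintro _ ⟨i, _, rfl⟩; exact he i

lemma VMeet.restrict {S : Set (ι → G)} (hm : VMeet S) (he : ∀ i, ev i ∈ S) (I : Set ι)
    (v w : ι → G) (hv : v ∈ S) (hw : w ≠ 0) (h1 : ∀ i ∈ I, w i = v i) (h2 : ∀ i, i ∉ I → w i = 0) :
    w ∈ S := by
  refine hm.meet (ev '' I) (insert v (ev '' Iᶜ)) (ev_sub he _)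
    (Set.insert_subset hv (ev_sub he _)) w hw ((mem_span_ev _ _).2 h2) ?_ ?_
  · rw [Submodule.mem_span_insert]
    refine ⟨1, w - v, ?_, by simp⟩
    rw [mem_span_ev]
    intro i hi
    simp at hi
    simp [h1 i hi]
  · intro y hy1 hy2
    rw [mem_span_ev] at hy1
    rw [Submodule.mem_span_insert] at hy2
    obtain ⟨a, z, hz, rfl⟩ := hy2
    rw [mem_span_ev] at hz
    refine ⟨a, ?_⟩
    ext i
    by_cases hi : i ∈ I
    · simp [hz i (by simpa using hi), h1 i hi]
    · have := hy1 i hi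
      rw [this]; simp [h2 i hi]

lemma ev_add_ne {i j : ι} (hij : i ≠ j) (x : G) : (ev i + x • ev j : ι → G) ≠ 0 := by
  intro h
  have := congrFun h i
  simp [ev, hij] at this

lemma VMeet.comp {S : Set (ι → G)} (hm : VMeet S) (he : ∀ i, ev i ∈ S) {i j k : ι}
    (hij : i ≠ j) (hik : i ≠ k) (hjk : j ≠ k) (x y : G) (h1 : ev i + x • ev j ∈ S)
    (h2 : ev j + y • ev k ∈ S) : ev i + (-(x * y)) • ev k ∈ S := by
  refine hm.meet (ev '' {i, k}) {ev i + x • ev j, ev j + y • ev k} (ev_sub he _)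
    (Set.insert_subset h1 (by simpa)) _ (ev_add_ne hik _) ?_ ?_ ?_
  · rw [mem_span_ev]
    intro l hl
    simp at hl
    simp [ev, hl]
  · rw [Submodule.mem_span_pair]
    refine ⟨1, -x, ?_⟩
    ext l
    simp
    ring
  · intro w hw1 hw2
    rw [mem_span_ev] at hw1
    rw [Submodule.mem_span_pair] at hw2
    obtain ⟨a, b, rfl⟩ := hw2
    have := hw1 j (by simp [hij.symm, hjk])
    simp [ev, hij.symm, hjk] at this
    refine ⟨a, ?_⟩
    have hb : b = - (a * x) := by linear_combination this
    subst hb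
    ext l
    simp
    ring

lemma VMeet.update {S : Set (ι → G)} (hm : VMeet S) (he : ∀ i, ev i ∈ S) {i k : ι}
    (hik : i ≠ k) (d : G) (v : ι → G) (hv : v ∈ S) (hvi : v i ≠ 0) (h : ev i + d • ev k ∈ S) :
    Function.update v k (d * v i) ∈ S := by
  refine hm.meet {v, ev k} (insert (ev i + d • ev k) (ev '' {i, k}ᶜ))
    (Set.insert_subset hv (by simpa using he k)) (Set.insert_subset h (ev_sub he _)) _ ?_ ?_ ?_ ?_
  · intro h
    have := congrFun h i
    simp [hik, hvi] at this
  · rw [Submodule.mem_span_pair]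
    refine ⟨1, d * v i - v k, ?_⟩
    ext l
    by_cases hl : l = k
    · subst hl; simp [ev]
    · simp [ev, hl]
  · rw [Submodule.mem_span_insert]
    refine ⟨v i, Function.update v k (d * v i) - v i • (ev i + d • ev k), ?_, by simp⟩
    rw [mem_span_ev]
    intro l hl
    simp only [Set.mem_compl_iff, Set.mem_insert_iff, Set.mem_singleton_iff, not_not] at hl
    rcases hl with rfl | rfl
    · simp [ev, hik]
    · simp [ev, hik.symm]; ring
  · intro w hw1 hw2
    rw [Submodule.mem_span_pair] at hw1
    rw [Submodule.mem_span_insert] at hw2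
    obtain ⟨a, b, rfl⟩ := hw1
    obtain ⟨c, z, hz, hw⟩ := hw2
    rw [mem_span_ev] at hz
    have e1 := congrFun hw i
    have e2 := congrFun hw k
    have z1 := hz i (by simp)
    have z2 := hz k (by simp)
    simp [ev, hik, hik.symm, z1, z2] at e1 e2
    refine ⟨a, ?_⟩
    ext l
    by_cases hl : l = k
    · subst hl; simp [ev]; rw [e2, ← e1]; ring
    · simp [ev, hl]

lemma VMeet.add3 {S : Set (ι → G)} (hm : VMeet S) (he : ∀ i, ev i ∈ S) {i j k : ι}
    (hij : i ≠ j) (hik : i ≠ k) (hjk : j ≠ k) (x y : G) (h1 : ev i + x • ev j + y • ev k ∈ S)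
    (h2 : ev j + (-1 : G) • ev k ∈ S) : ev i + (x + y) • ev j ∈ S := by
  refine hm.meet (ev '' {i, j}) {ev i + x • ev j + y • ev k, ev j + (-1 : G) • ev k} (ev_sub he _)
    (Set.insert_subset h1 (by simpa using h2)) _ (ev_add_ne hij _) ?_ ?_ ?_
  · rw [mem_span_ev]
    intro l hl
    simp at hl
    simp [ev, hl]
  · rw [Submodule.mem_span_pair]
    refine ⟨1, y, ?_⟩
    ext l
    simp
    ring
  · intro w hw1 hw2
    rw [mem_span_ev] at hw1
    rw [Submodule.mem_span_pair] at hw2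
    obtain ⟨a, b, rfl⟩ := hw2
    have := hw1 k (by simp [hik.symm, hjk.symm])
    simp [ev, hik.symm, hjk.symm] at this
    refine ⟨a, ?_⟩
    have hb : b = (a * y) := by linear_combination -this
    subst hb
    ext l
    simp
    ring

lemma VMeet.one {S : Set (ι → G)} (hm : VMeet S) (he : ∀ i, ev i ∈ S) (h1 : (fun _ => 1) ∈ S)
    {i j : ι} (hij : i ≠ j) : ev i + (1 : G) • ev j ∈ S := by
  refine hm.restrict he {i, j} _ _ h1 (ev_add_ne hij _) ?_ ?_
  · rintro l (rfl | rfl)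
    · simp [ev, hij]
    · simp [ev, hij.symm]
  · intro l hl
    simp at hl
    simp [ev, hl]

lemma VMeet.neg_one {S : Set (ι → G)} (hm : VMeet S) (he : ∀ i, ev i ∈ S) (h1 : (fun _ => 1) ∈ S)
    (h3 : ∀ i j : ι, ∃ k, k ≠ i ∧ k ≠ j)
    {i j : ι} (hij : i ≠ j) : ev i + (-1 : G) • ev j ∈ S := by
  obtain ⟨k, hki, hkj⟩ := h3 i j
  simpa using hm.comp he hki.symm hij hkj 1 1 (hm.one he h1 hki.symm) (hm.one he h1 hkj)

lemma VMeet.all {S : Set (ι → G)} (hm : VMeet S) (he : ∀ i, ev i ∈ S) (h1 : (fun _ => 1) ∈ S)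
    (h3 : ∀ i j : ι, ∃ k, k ≠ i ∧ k ≠ j)
    {i j : ι} (hij : i ≠ j) (x : G) (h : ev i + x • ev j ∈ S) :
    ∀ i' j', i' ≠ j' → ev i' + x • ev j' ∈ S := by
  have n1 : ∀ {i j : ι}, i ≠ j → ev i + (-1 : G) • ev j ∈ S := hm.neg_one he h1 h3
  have mr : ∀ i j k : ι, i ≠ j → i ≠ k → ev i + x • ev j ∈ S → ev i + x • ev k ∈ S := by
    intro i j k hij hik h
    by_cases hjk : j = k
    · exact hjk ▸ h
    · simpa using hm.comp he hij hik hjk x (-1) h (n1 hjk)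
  have ml : ∀ i j k : ι, i ≠ j → k ≠ j → ev i + x • ev j ∈ S → ev k + x • ev j ∈ S := by
    intro i j k hij hkj h
    by_cases hik : i = k
    · exact hik ▸ h
    · simpa using hm.comp he (Ne.symm hik) hkj hij (-1) x (n1 (Ne.symm hik)) h
  intro i' j' hij'
  obtain ⟨k, hki, hkj⟩ := h3 i i'
  have a1 := mr i j k hij hki.symm h
  have a2 := ml i k i' hki.symm hkj.symm a1
  exact mr i' k j' hkj.symm hij' a2

/-- the subfield -/
def vfield (S : Set (ι → G)) (hm : VMeet S) (he : ∀ i, ev i ∈ S) (h1 : (fun _ => 1) ∈ S)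
    (h3 : ∀ i j : ι, ∃ k, k ≠ i ∧ k ≠ j) [Nonempty ι] : Subfield G where
  carrier := {x | ∀ i j, i ≠ j → ev i + x • ev j ∈ S}
  zero_mem' := by intro i j _; simpa using he i
  one_mem' := fun i j hij => hm.one he h1 hij
  neg_mem' := by
    intro x hx i j hij
    obtain ⟨k, hki, hkj⟩ := h3 i j
    simpa using hm.comp he hki.symm hij hkj x 1 (hx _ _ hki.symm) (hm.one he h1 hkj)
  mul_mem' := by
    intro x y hx hy i j hij
    obtain ⟨k, hki, hkj⟩ := h3 i j
    have := hm.comp he hki.symm hij hkj x y (hx _ _ hki.symm) (hy _ _ hkj)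
    simpa using hm.comp he hki.symm hij hkj _ 1
      (hm.all he h1 h3 hij _ this i k hki.symm) (hm.one he h1 hkj)
  add_mem' := by
    intro x y hx hy i j hij
    obtain ⟨k, hki, hkj⟩ := h3 i j
    refine hm.add3 he hij hki.symm hkj.symm x y ?_ (hm.neg_one he h1 h3 hkj.symm)
    have := hm.update he hki.symm y _ (hx i j hij) (by simp [ev, hij]) (hy i k hki.symm)
    convert this using 1
    ext l
    by_cases hl : l = k
    · subst hl; simp [ev, hij, hki, hkj]
    · simp [ev, hl]
  inv_mem' := by
    intro x hx
    by_cases hx0 : x = 0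
    · subst hx0; simpa using fun i _ _ => he i
    intro i j hij
    have := hm.smul x⁻¹ (inv_ne_zero hx0) _ (ev_add_ne hij.symm x) (hx j i hij.symm)
    convert this using 1
    rw [smul_add, smul_smul, inv_mul_cancel₀ hx0, one_smul, add_comm]

lemma vfield_ratio (S : Set (ι → G)) (hm : VMeet S) (he : ∀ i, ev i ∈ S) (h1 : (fun _ => 1) ∈ S)
    (h3 : ∀ i j : ι, ∃ k, k ≠ i ∧ k ≠ j) [Nonempty ι] (v : ι → G) (hv : v ∈ S) (i j : ι)
    (hi : v i ≠ 0) : v j / v i ∈ vfield S hm he h1 h3 := by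
  by_cases hij : i = j
  · subst hij; rw [div_self hi]; exact one_mem _
  have h := hm.restrict he {i, j} v (v i • (ev i + (v j / v i) • ev j)) hv
    (smul_ne_zero hi (ev_add_ne hij _)) (by
      rintro l (rfl | rfl)
      · simp [ev, hij]
      · simp [ev, Ne.symm hij]; field_simp) (by
      intro l hl
      simp at hl
      simp [ev, hl])
  have h' := hm.smul (v i)⁻¹ (inv_ne_zero hi) _ (smul_ne_zero hi (ev_add_ne hij _)) h
  rw [smul_smul, inv_mul_cancel₀ hi, one_smul] at h'
  exact hm.all he h1 h3 hij _ h'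

lemma vfield_top (S : Set (ι → G)) (hm : VMeet S) (he : ∀ i, ev i ∈ S) (h1 : (fun _ => 1) ∈ S)
    (h3 : ∀ i j : ι, ∃ k, k ≠ i ∧ k ≠ j) [Nonempty ι] (ht : ∀ x, x ∈ vfield S hm he h1 h3)
    (v : ι → G) (hv : v ≠ 0) : v ∈ S := by
  obtain ⟨i, hi⟩ : ∃ i, v i ≠ 0 := by
    by_contra! h
    exact hv (funext h)
  have key : ∀ I : Finset ι, i ∉ I → (fun l => if l = i ∨ l ∈ I then v l else 0) ∈ S := by
    intro I
    induction I using Finset.induction_on with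
    | empty =>
      intro _
      have := hm.smul (v i) hi (ev i) (by
        intro h; have := congrFun h i; simp [ev] at this) (he i)
      convert this using 1
      ext l
      by_cases hl : l = i
      · subst hl; simp [ev]
      · simp [ev, hl]
    | insert k I hk ih =>
      intro hiI
      simp at hiI
      have := hm.update he hiI.1 (v k / v i) _ (ih hiI.2) (by simpa using hi)
        (ht _ _ _ hiI.1)
      convert this using 1
      ext l
      by_cases hl : l = k
      · subst hl; simp; field_simp
      · simp [hl]
  have := key (Finset.univ.erase i) (by simp)
  convert this using 1
  ext l
  by_cases hl : l = i <;> simp [hl]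

end ArcAux

section ArcAux2

variable {G : Type*} [Field G] {m : ℕ}

lemma arc_hyper {K : Set (ℙ G (Fin (m + 1) → G))} (hK : IsArc m K)
    (φ : (Fin (m + 1) → G) →ₗ[G] G) (hφ : φ ≠ 0) (S : Finset (ℙ G (Fin (m + 1) → G)))
    (hS : ↑S ⊆ K) (hc : S.card = m + 1) (h : ∀ p ∈ S, φ p.rep = 0) : False := by
  have h1 := hK.2 S hS hc
  apply hφ
  have : (⨆ p ∈ S, p.submodule) ≤ LinearMap.ker φ := by
    refine iSup₂_le fun p hp => ?_
    rw [Projectivization.submodule_eq, Submodule.span_singleton_le_iff_mem]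
    exact h p hp
  rw [h1] at this
  exact LinearMap.ker_eq_top.1 (top_le_iff.1 this)

lemma arc_coord {K : Set (ℙ G (Fin (m + 1) → G))} (hK : IsArc m K)
    (g : Fin (m + 1) → ℙ G (Fin (m + 1) → G)) (hg : Function.Injective g) (hgK : ∀ i, g i ∈ K)
    (b : Module.Basis (Fin (m + 1)) G (Fin (m + 1) → G))
    (hb : ∀ i, ∃ c : G, (g i).rep = c • b i)
    (z) (hz : z ∈ K) (hzg : ∀ i, z ≠ g i) (i) : b.repr z.rep i ≠ 0 := by
  classical
  intro h0
  refine arc_hyper hK (b.coord i) ?_ (insert z ((Finset.univ.erase i).image g)) ?_ ?_ ?_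
  · intro h
    have := LinearMap.congr_fun h (b i)
    simp at this
  · intro p hp
    simp at hp
    rcases hp with rfl | ⟨j, _, rfl⟩
    · exact hz
    · exact hgK j
  · rw [Finset.card_insert_of_notMem, Finset.card_image_of_injective _ hg]
    · simp
    · simp; intro j _ h; exact hzg j h.symm
  · intro p hp
    simp at hp
    rcases hp with rfl | ⟨j, hj, rfl⟩
    · simpa using h0
    · obtain ⟨c, hc⟩ := hb j
      simp [hc, Finsupp.single_apply, hj]

lemma arc_det {K : Set (ℙ G (Fin (m + 1) → G))} (hK : IsArc m K)
    (g : Fin (m + 1) → ℙ G (Fin (m + 1) → G)) (hg : Function.Injective g) (hgK : ∀ i, g i ∈ K)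
    (b : Module.Basis (Fin (m + 1)) G (Fin (m + 1) → G))
    (hb : ∀ i, ∃ c : G, (g i).rep = c • b i)
    (z) (hz : z ∈ K) (hzg : ∀ i, z ≠ g i) (y) (hy : y ∈ K) (hyg : ∀ i, y ≠ g i) (hzy : z ≠ y)
    (i j) (hij : i ≠ j) :
    b.repr z.rep i * b.repr y.rep j ≠ b.repr z.rep j * b.repr y.rep i := by
  classical
  intro h0
  have hzi := arc_coord hK g hg hgK b hb z hz hzg i
  refine arc_hyper hK (b.repr z.rep i • b.coord j - b.repr z.rep j • b.coord i) ?_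
    (insert z (insert y (((Finset.univ.erase i).erase j).image g))) ?_ ?_ ?_
  · intro h
    have := LinearMap.congr_fun h (b j)
    simp [Finsupp.single_apply, hij.symm, hzi] at this
  · intro p hp
    simp at hp
    rcases hp with rfl | rfl | ⟨j, _, rfl⟩
    · exact hz
    · exact hy
    · exact hgK j
  · rw [Finset.card_insert_of_notMem, Finset.card_insert_of_notMem,
      Finset.card_image_of_injective _ hg, Finset.card_erase_of_mem (by simp [hij.symm]),
      Finset.card_erase_of_mem (by simp)]
    · have := i.isLt
      have := j.isLt
      have : i.val ≠ j.val := fun h => hij (Fin.ext h)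
      simp; omega
    · simp; intro j _ _ h; exact hyg j h.symm
    · simp; exact ⟨hzy, fun j _ _ h => hzg j h.symm⟩
  · intro p hp
    simp at hp
    rcases hp with rfl | rfl | ⟨l, hl, rfl⟩
    · simp; ring
    · simp; linear_combination h0
    · obtain ⟨c, hc⟩ := hb l
      simp [hc, Finsupp.single_apply, hl]

lemma arc_basis {K : Set (ℙ G (Fin (m + 1) → G))} (hK : IsArc m K)
    (g : Fin (m + 1) → ℙ G (Fin (m + 1) → G)) (hg : Function.Injective g) (hgK : ∀ i, g i ∈ K)
    (u) (hu : u ∈ K) (hug : ∀ i, u ≠ g i) :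
    ∃ b : Module.Basis (Fin (m + 1)) G (Fin (m + 1) → G),
      (∀ i, ∃ c : G, (g i).rep = c • b i) ∧ ∀ i, b.repr u.rep i = 1 := by
  classical
  have hspan : ⊤ ≤ Submodule.span G (Set.range fun i => (g i).rep) := by
    rw [← hK.2 (Finset.univ.image g) (by intro p; simp; rintro i rfl; exact hgK i)
      (by rw [Finset.card_image_of_injective _ hg]; simp)]
    refine iSup₂_le fun p hp => ?_
    simp at hp
    obtain ⟨i, rfl⟩ := hp
    rw [Projectivization.submodule_eq, Submodule.span_singleton_le_iff_mem]
    exact Submodule.subset_span ⟨i, rfl⟩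
  let b0 := basisOfTopLeSpanOfCardEqFinrank (fun i => (g i).rep) hspan (by simp)
  have hb0 : ∀ i, b0 i = (g i).rep := by intro i; simp [b0]
  have hc := arc_coord hK g hg hgK b0 (fun i => ⟨1, by simp [hb0]⟩) u hu hug
  refine ⟨b0.unitsSMul fun i => Units.mk0 _ (hc i), fun i => ⟨(b0.repr u.rep i)⁻¹, ?_⟩, fun i => ?_⟩
  · rw [Module.Basis.unitsSMul_apply, ← hb0, Units.smul_def, smul_smul]
    simp [hc i]
  · rw [Module.Basis.repr_unitsSMul, Units.smul_def]
    simp [hc i]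

lemma map_span_points (e : (Fin (m + 1) → G) ≃ₗ[G] (Fin (m + 1) → G))
    (T : Set (ℙ G (Fin (m + 1) → G)))
    (A : Set (Fin (m + 1) → G)) (hA : ∀ v ∈ A, ∃ h : e v ≠ 0, Projectivization.mk G _ h ∈ T) :
    ∃ A' ⊆ T, (⨆ p ∈ A', p.submodule) = (Submodule.span G A).map (e : _ →ₗ[G] _) := by
  refine ⟨{p | ∃ v ∈ A, ∃ h : e v ≠ 0, p = Projectivization.mk G _ h}, ?_, le_antisymm ?_ ?_⟩
  · rintro p ⟨v, hv, h, rfl⟩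
    exact (hA v hv).2
  · refine iSup₂_le ?_
    rintro p ⟨v, hv, h, rfl⟩
    rw [Projectivization.submodule_mk, Submodule.span_singleton_le_iff_mem]
    exact Submodule.mem_map_of_mem (Submodule.subset_span hv)
  · rw [Submodule.map_span, Submodule.span_le]
    rintro _ ⟨v, hv, rfl⟩
    obtain ⟨h, _⟩ := hA v hv
    have : (Projectivization.mk G _ h).submodule ≤ ⨆ p ∈ {p | ∃ v ∈ A, ∃ h : e v ≠ 0,
        p = Projectivization.mk G _ h}, p.submodule :=
      le_iSup₂_of_le (Projectivization.mk G _ h) ⟨v, hv, h, rfl⟩ le_rfl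
    apply this
    rw [Projectivization.submodule_mk]
    exact Submodule.mem_span_singleton_self _

lemma vmeet_of_closed (e : (Fin (m + 1) → G) ≃ₗ[G] (Fin (m + 1) → G))
    (T : Set (ℙ G (Fin (m + 1) → G))) (hT : ClosedUnderMeets T) :
    VMeet {v | ∃ h : e v ≠ 0, Projectivization.mk G _ h ∈ T} := by
  intro A B hA hB x hx h
  obtain ⟨A', hA', hA2⟩ := map_span_points e T A hA
  obtain ⟨B', hB', hB2⟩ := map_span_points e T B hB
  have hx' : e x ≠ 0 := by simpa using hx
  refine ⟨hx', hT A' B' hA' hB' _ ?_⟩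
  rw [hA2, hB2, ← Submodule.map_inf _ e.injective, h, Submodule.map_span,
    Projectivization.submodule_mk]
  simp

end ArcAux2

/-- Let `K` be a `q`-arc in `PG(n,q)` with `q ≥ n+3` (and `n ≥ 2`), or with `q = n+2` a prime
(and `n ≥ 2`).  Then the closure of `K` is all of `PG(n,q)`. -/
theorem arc_ptClosure_eq_univ [Fintype F] {q : ℕ} (hq : Fintype.card F = q)
    (K : Set (ℙ F (Fin (n + 1) → F))) (hK : IsArc n K) (hKcard : K.ncard = q)
    (hcase : (2 ≤ n ∧ n + 3 ≤ q) ∨ (2 ≤ n ∧ q = n + 2 ∧ Nat.Prime q)) :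
    ptClosure K = Set.univ := by
  classical
  have hn : 2 ≤ n := by omega
  have hq2 : n + 2 ≤ q := by omega
  have hKfin : K.Finite := Set.finite_of_ncard_pos (by omega)
  refine Set.eq_univ_of_forall fun x => ?_
  rintro T ⟨hKT, hT⟩
  -- choose the frame
  obtain ⟨S0, hS0K, hS0⟩ := Set.exists_subset_card_eq (s := K) (n := n + 1) (by omega)
  have hS0fin : S0.Finite := hKfin.subset hS0K
  obtain ⟨g, hg, hgr⟩ : ∃ g : Fin (n + 1) → ℙ F (Fin (n + 1) → F), Function.Injective g ∧
      Set.range g = S0 := by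
    have := hS0fin.to_subtype
    have e := Finite.equivFinOfCardEq (α := S0) (n := n + 1) hS0
    refine ⟨fun i => (e.symm i : _), Subtype.val_injective.comp e.symm.injective, ?_⟩
    ext p
    constructor
    · rintro ⟨i, rfl⟩; exact (e.symm i).2
    · intro hp; exact ⟨e ⟨p, hp⟩, by simp⟩
  have hgK : ∀ i, g i ∈ K := fun i => hS0K (hgr ▸ ⟨i, rfl⟩)
  have hd := Set.le_ncard_diff S0 K hS0fin
  obtain ⟨u, huK, huS⟩ : (K \ S0).Nonempty := by
    apply Set.nonempty_of_ncard_ne_zero; omega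
  have hngr : ∀ z, z ∉ S0 → ∀ i, z ≠ g i := by
    rintro z hz i rfl; exact hz (hgr ▸ ⟨i, rfl⟩)
  obtain ⟨b, hb, hbu⟩ := arc_basis hK g hg hgK u huK (hngr u huS)
  let e := b.equivFun.symm
  let S : Set (Fin (n + 1) → F) := {v | ∃ h : e v ≠ 0, Projectivization.mk F _ h ∈ T}
  have hm : VMeet S := vmeet_of_closed e T hT
  have hrep : ∀ z ∈ T, (fun i => b.repr z.rep i) ∈ S := by
    intro z hz
    have : e (fun i => b.repr z.rep i) = z.rep := b.equivFun.symm_apply_apply z.rep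
    refine ⟨by rw [this]; exact z.rep_nonzero, ?_⟩
    convert hz
    conv_rhs => rw [← Projectivization.mk_rep z]
    congr 1
  have he : ∀ i, ev i ∈ S := by
    intro i
    have hev : e (ev i) = b i := by simp [e, ev]
    refine ⟨by rw [hev]; exact b.ne_zero i, ?_⟩
    convert hKT (hgK i)
    rw [← Projectivization.mk_rep (g i), Projectivization.mk_eq_mk_iff']
    obtain ⟨c, hc⟩ := hb i
    have hc0 : c ≠ 0 := by
      rintro rfl; exact (g i).rep_nonzero (by simpa using hc)
    exact ⟨c⁻¹, by rw [hc, hev, smul_smul, inv_mul_cancel₀ hc0, one_smul]⟩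
  have h1 : (fun _ => 1) ∈ S := by
    have := hrep u (hKT huK)
    simpa [hbu] using this
  have h3 : ∀ i j : Fin (n + 1), ∃ k, k ≠ i ∧ k ≠ j := by
    intro i j
    by_contra! h
    have : (Finset.univ : Finset (Fin (n + 1))) ⊆ {i, j} := by
      intro k _
      by_cases hk : k = i
      · simp [hk]
      · simp [h k hk]
    have := Finset.card_le_card this
    have := Finset.card_le_two (a := i) (b := j)
    simp at *
    omega
  let F0 := vfield S hm he h1 h3
  suffices htop : ∀ y, y ∈ F0 by
    have hx := vfield_top S hm he h1 h3 htop (e.symm x.rep) (by simpa using x.rep_nonzero)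
    obtain ⟨h, hx⟩ := hx
    convert hx
    conv_lhs => rw [← Projectivization.mk_rep x]
    congr 1
    simp
  by_contra! hne
  obtain ⟨t, ht⟩ := hne
  have hlt : Nat.card F0 < q := by
    rw [← hq, Nat.card_eq_fintype_card]
    exact Fintype.card_subtype_lt ht
  have hpow : q = Nat.card F0 ^ Module.finrank F0 F := by
    rw [← hq, Nat.card_eq_fintype_card]
    exact Module.card_eq_pow_finrank
  generalize Module.finrank F0 F = k at hpow
  have hk0 : k ≠ 0 := by rintro rfl; simp at hpow; omega
  have hk1 : k ≠ 1 := by rintro rfl; rw [pow_one] at hpow; omega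
  rcases hcase with ⟨-, hq3⟩ | ⟨-, -, hp⟩
  swap
  · rw [hpow] at hp
    exact hk1 (Nat.Prime.eq_one_of_pow hp)
  have hr0 : 0 < Nat.card F0 := Nat.card_pos
  have hsq : Nat.card F0 ^ 2 ≤ q := by
    rw [hpow]; exact Nat.pow_le_pow_right hr0 (by omega)
  have hD : ((F0 : Set F) \ {0}).ncard = Nat.card F0 - 1 := by
    rw [Set.ncard_sdiff_singleton_of_mem (zero_mem F0)]; rfl
  obtain ⟨z, ⟨hzK, hzS⟩, hzu⟩ : ((K \ S0) \ {u}).Nonempty := by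
    apply Set.nonempty_of_ncard_ne_zero
    rw [Set.ncard_sdiff_singleton_of_mem (show u ∈ K \ S0 from ⟨huK, huS⟩)]; omega
  have hcz := arc_coord hK g hg hgK b hb
  have b1 : (Set.univ : Set (Fin (n + 1))).ncard ≤ ((F0 : Set F) \ {0}).ncard := by
    refine Set.ncard_le_ncard_of_injOn (fun i => b.repr z.rep i / b.repr z.rep 0) ?_ ?_
      (Set.toFinite _)
    · intro i _
      exact ⟨vfield_ratio S hm he h1 h3 _ (hrep z (hKT hzK)) 0 i (hcz z hzK (hngr z hzS) 0),
        div_ne_zero (hcz z hzK (hngr z hzS) i) (hcz z hzK (hngr z hzS) 0)⟩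
    · intro i _ j _ hij
      by_contra hne
      have := arc_det hK g hg hgK b hb z hzK (hngr z hzS) u huK (hngr u huS) hzu i j hne
      rw [hbu, hbu, mul_one, mul_one] at this
      exact this ((div_left_inj' (hcz z hzK (hngr z hzS) 0)).1 hij)
  have h01 : (0 : Fin (n + 1)) ≠ Fin.last n := by
    intro h; have := congrArg Fin.val h; simp at this; omega
  have b2 : (K \ S0).ncard ≤ ((F0 : Set F) \ {0}).ncard := by
    refine Set.ncard_le_ncard_of_injOn
      (fun z => b.repr z.rep (Fin.last n) / b.repr z.rep 0) ?_ ?_ (Set.toFinite _)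
    · rintro z ⟨hzK, hzS⟩
      exact ⟨vfield_ratio S hm he h1 h3 _ (hrep z (hKT hzK)) 0 _ (hcz z hzK (hngr z hzS) 0),
        div_ne_zero (hcz z hzK (hngr z hzS) _) (hcz z hzK (hngr z hzS) 0)⟩
    · rintro z ⟨hzK, hzS⟩ y ⟨hyK, hyS⟩ hzy
      by_contra hne
      have := arc_det hK g hg hgK b hb z hzK (hngr z hzS) y hyK (hngr y hyS) hne 0 _ h01
      have hz0 := hcz z hzK (hngr z hzS) 0
      have hy0 := hcz y hyK (hngr y hyS) 0
      simp only at hzy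
      rw [div_eq_div_iff hz0 hy0] at hzy
      exact this (by linear_combination -hzy)
  rw [hD] at b1 b2
  rw [Set.ncard_univ, Nat.card_eq_fintype_card, Fintype.card_fin] at b1
  generalize Nat.card F0 = r at *
  have : r * 2 ≤ r ^ 2 := by
    rw [pow_two]; exact Nat.mul_le_mul_left _ (by omega)
  omega
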